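/- Let F be an algebraically closed field of prime characteristic p, let G be a finite group, and write |G| = p^a·q with p not dividing q (so p^a is the order of a p-Sylow subgroup of G). Then: (1) p^a divides dim_F P for every finite-dimensional projective module P over the group algebra FG; and (2) for any natural number n, if n divides dim_F P for every nonzero finite-dimensional projective FG-module P, then n divides p^a. Equivalently, the greatest common divisor of the F-dimensions of the nonzero finite-dimensional projective FG-modules equals p^a. -/

import Mathlib

/-!
Let `S` be a finite `p`-group and `V` a finite-dimensional representation of `S` in characteristic
`p`. Since nonzero subrepresentations have nonzero invariants, an equivariant map that is injective
on invariants is injective. Applied to a map `V → (S → V^S)` and to a map `(S → N V) → V`, where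
`N = ∑ s` is the norm, this gives `|S| dim (N V) ≤ dim V ≤ |S| dim (V^S)`.

By Higman's criterion, projectivity of `V` over a group algebra means that
`∑ g, g ∘ π ∘ g⁻¹ = 1` for some linear `π`. This condition passes to subgroups and forces
`V^S = N V`, so `dim V = |S| dim (V^S)` for a Sylow `p`-subgroup `S`. Conversely, it holds for the
permutation module on `G ⧸ L` whenever `p` does not divide `|L|`; taking for `L` the trivial
subgroup and the Sylow `l`-subgroups, `l ≠ p`, leaves only the divisors of `p ^ a`.
-/

open MonoidAlgebra Representation

section LeftTranslation

variable {k S U : Type*} [Group S]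

/-- The representation of `S` on functions `S → U` by left translation, `(s • c) t = c (s⁻¹ * t)`;
it is the representation induced from the vector space `U`. -/
def leftTranslation (k S U : Type*) [Semiring k] [Group S] [AddCommMonoid U] [Module k U] :
    Representation k S (S → U) where
  toFun s := LinearMap.funLeft k U fun t => s⁻¹ * t
  map_one' := by ext; simp [LinearMap.funLeft]
  map_mul' s t := LinearMap.ext fun c => funext fun u => by simp [LinearMap.funLeft, mul_assoc]

lemma leftTranslation_apply [Semiring k] [AddCommMonoid U] [Module k U] (s t : S) (c : S → U) :
    leftTranslation k S U s c t = c (s⁻¹ * t) :=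
  rfl

lemma eq_apply_one_of_mem_invariants_leftTranslation [CommRing k] [AddCommGroup U] [Module k U]
    {c : S → U} (hc : c ∈ (leftTranslation k S U).invariants) (s : S) : c s = c 1 := by
  simpa [leftTranslation_apply] using (congrFun (hc s) s).symm

end LeftTranslation

section PGroup

variable {p : ℕ} [Fact p.Prime] {k S V : Type*} [Group S] [AddCommGroup V]

lemma exists_mem_invariants_ne_zero [CommRing k] [CharP k p] [Module k V] [Finite S]
    (hS : IsPGroup p S) (ρ : Representation k S V) {W : Submodule k V}
    (hρW : ∀ s, W ≤ W.comap (ρ s)) (hW : W ≠ ⊥) : ∃ v ∈ W, v ∈ ρ.invariants ∧ v ≠ 0 := by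
  obtain ⟨v, hv, hv0⟩ := W.exists_mem_ne_zero_of_ne_bot hW
  let _ : Algebra (ZMod p) k := ZMod.algebra k p
  let _ : Module (ZMod p) V := Module.compHom V (algebraMap (ZMod p) k)
  have _ : IsScalarTower (ZMod p) k V := .of_algebraMap_smul fun _ _ => rfl
  let _ : MulAction S V := MulAction.compHom V ρ
  -- The fixed-point count for `p`-groups needs a finite set: the `𝔽_p`-span of the orbit of `v`.
  let A : Submodule (ZMod p) V := Submodule.span (ZMod p) (Set.range fun s => ρ s v)
  have hAW : A ≤ W.restrictScalars (ZMod p) :=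
    Submodule.span_le.2 <| Set.range_subset_iff.2 fun s => hρW s hv
  have hρA (s : S) : A ≤ A.comap ((ρ s).restrictScalars (ZMod p)) :=
    Submodule.span_le.2 <| Set.range_subset_iff.2 fun t =>
      Submodule.subset_span ⟨s * t, by simp⟩
  let B : SubMulAction S V := ⟨A, fun s _ hx => hρA s hx⟩
  have hvA : v ∈ A := Submodule.subset_span ⟨1, by simp⟩
  have _ : Module.Finite (ZMod p) A := .span_of_finite (ZMod p) (Set.finite_range _)
  have _ : Finite A := Module.finite_of_finite (ZMod p)
  have _ : Finite B := ‹Finite A›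
  have _ : Nontrivial A := ⟨⟨v, hvA⟩, 0, fun h => hv0 (congrArg Subtype.val h)⟩
  have hcard : p ∣ Nat.card B := by
    change p ∣ Nat.card A
    rw [Module.natCard_eq_pow_finrank (K := ZMod p) (V := A), Nat.card_zmod]
    exact dvd_pow_self _ Module.finrank_pos.ne'
  obtain ⟨b, hb, hb0⟩ := hS.exists_fixed_point_of_prime_dvd_card_of_fixed_point B hcard
    (a := ⟨0, A.zero_mem⟩) fun s => Subtype.ext (map_zero (ρ s))
  exact ⟨b, hAW b.2, fun s => congrArg Subtype.val (hb s), fun h => hb0 (Subtype.ext h.symm)⟩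

lemma eq_bot_of_disjoint_invariants [CommRing k] [CharP k p] [Module k V] [Finite S]
    (hS : IsPGroup p S) (ρ : Representation k S V) {W : Submodule k V}
    (hρW : ∀ s, W ≤ W.comap (ρ s)) (hW : Disjoint W ρ.invariants) : W = ⊥ := by
  by_contra hne
  obtain ⟨v, hvW, hv, hv0⟩ := exists_mem_invariants_ne_zero hS ρ hρW hne
  exact hv0 (Submodule.disjoint_def.1 hW v hvW hv)

variable [Field k] [CharP k p] [Module k V] [FiniteDimensional k V]

lemma finrank_le_card_mul_finrank_invariants [Finite S] (hS : IsPGroup p S)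
    (ρ : Representation k S V) :
    Module.finrank k V ≤ Nat.card S * Module.finrank k ρ.invariants := by
  have _ : Fintype S := .ofFinite S
  obtain ⟨r, hr⟩ := ρ.invariants.subtype.exists_leftInverse_of_injective ρ.invariants.ker_subtype
  let Φ : V →ₗ[k] S → ρ.invariants := LinearMap.pi fun s => r ∘ₗ ρ s
  have hΦ : LinearMap.ker Φ = ⊥ := by
    refine eq_bot_of_disjoint_invariants hS ρ (fun s v hv => ?_)
      (Submodule.disjoint_def.2 fun v hv hinv => ?_)
    · funext t
      simpa [Φ] using congrFun hv (t * s)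
    · have hrv : r v = 0 := by simpa [Φ] using congrFun hv 1
      have hv' : r v = ⟨v, hinv⟩ := LinearMap.congr_fun hr ⟨v, hinv⟩
      exact congrArg Subtype.val (hv'.symm.trans hrv)
  simpa [Module.finrank_pi_fintype] using
    LinearMap.finrank_le_finrank_of_injective (LinearMap.ker_eq_bot.1 hΦ)

lemma card_mul_finrank_range_norm_le_finrank [Fintype S] (hS : IsPGroup p S)
    (ρ : Representation k S V) :
    Nat.card S * Module.finrank k (LinearMap.range ρ.norm) ≤ Module.finrank k V := by
  obtain ⟨j, hj⟩ := ρ.norm.rangeRestrict.exists_rightInverse_of_surjective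
    ρ.norm.range_rangeRestrict
  have hNj (u : LinearMap.range ρ.norm) : ρ.norm (j u) = u :=
    congrArg Subtype.val (LinearMap.congr_fun hj u)
  let Φ : (S → LinearMap.range ρ.norm) →ₗ[k] V := ∑ s, ρ s ∘ₗ j ∘ₗ LinearMap.proj s
  have hΦ (c : S → LinearMap.range ρ.norm) : Φ c = ∑ s, ρ s (j (c s)) := by simp [Φ]
  have hequiv (s : S) (c : S → LinearMap.range ρ.norm) :
      Φ (leftTranslation k S _ s c) = ρ s (Φ c) := by
    rw [hΦ, hΦ, map_sum, ← Equiv.sum_comp (Equiv.mulLeft s)]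
    simp [leftTranslation_apply]
  have hker : LinearMap.ker Φ = ⊥ := by
    refine eq_bot_of_disjoint_invariants hS (leftTranslation k S _) (fun s c hc => ?_)
      (Submodule.disjoint_def.2 fun c hc hinv => ?_)
    · rw [Submodule.mem_comap, LinearMap.mem_ker, hequiv, hc, map_zero]
    · have hconst := eq_apply_one_of_mem_invariants_leftTranslation hinv
      have hN : ρ.norm (j (c 1)) = Φ c := calc
        ρ.norm (j (c 1)) = ∑ s, ρ s (j (c 1)) := by simp [Representation.norm]
        _ = ∑ s, ρ s (j (c s)) := Finset.sum_congr rfl fun s _ => by rw [hconst s]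
        _ = Φ c := (hΦ c).symm
      have hc1 : c 1 = 0 := Subtype.ext ((hNj _).symm.trans (hN.trans hc))
      exact funext fun s => (hconst s).trans hc1
  simpa [Module.finrank_pi_fintype] using
    LinearMap.finrank_le_finrank_of_injective (LinearMap.ker_eq_bot.1 hker)

end PGroup

section Higman

variable {k G V X : Type*} [CommRing k] [Group G] [AddCommGroup V] [Module k V]

/-- Higman's condition on a representation of a finite group: the identity is the transfer
`∑ g, g ∘ π ∘ g⁻¹` of some linear endomorphism `π`. Over a field it characterizes projectivity
over the group algebra; over a general base ring it is projectivity relative to the trivial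
subgroup. -/
def IsRelativelyProjective [Fintype G] (ρ : Representation k G V) : Prop :=
  ∃ π : V →ₗ[k] V, ∀ v, ∑ g, ρ g (π (ρ g⁻¹ v)) = v

namespace IsRelativelyProjective

lemma comp_subtype [Fintype G] {ρ : Representation k G V} (hρ : IsRelativelyProjective ρ)
    (S : Subgroup G) [Fintype S] : IsRelativelyProjective (ρ.comp S.subtype) := by
  classical
  obtain ⟨π, hπ⟩ := hρ
  obtain ⟨T, hT, -⟩ := S.exists_isComplement_right 1
  let _ : Fintype T := Fintype.ofFinite T
  refine ⟨∑ t : T, ρ t ∘ₗ π ∘ₗ ρ (t : G)⁻¹, fun v => ?_⟩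
  calc
    _ = ∑ x : S × T, ρ (x.1 * x.2) (π (ρ (x.1 * x.2 : G)⁻¹ v)) := by
      simp [Fintype.sum_prod_type]
    _ = ∑ g, ρ g (π (ρ g⁻¹ v)) :=
      (Equiv.ofBijective _ hT).sum_comp fun g => ρ g (π (ρ g⁻¹ v))
    _ = v := hπ v

lemma range_norm_eq_invariants [Fintype G] {ρ : Representation k G V}
    (hρ : IsRelativelyProjective ρ) : LinearMap.range ρ.norm = ρ.invariants := by
  obtain ⟨π, hπ⟩ := hρ
  refine le_antisymm ?_ fun v hv => ⟨π v, ?_⟩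
  · rintro _ ⟨v, rfl⟩ g
    exact ρ.self_norm_apply g v
  · calc
      ρ.norm (π v) = ∑ g, ρ g (π (ρ g⁻¹ v)) := by simp [Representation.norm, hv _]
      _ = v := hπ v

theorem projective_asModule [Fintype G] [Module.Projective k V] {ρ : Representation k G V}
    (hρ : IsRelativelyProjective ρ) : Module.Projective k[G] ρ.asModule := by
  obtain ⟨π, hπ⟩ := hρ
  have _ : Module.Projective k ρ.asModule := ‹Module.Projective k V›
  let c : (ρ.asModule →₀ k[G]) →ₗ[k[G]] ρ.asModule := Finsupp.linearCombination k[G] id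
  obtain ⟨s, hs⟩ := Module.projective_lifting_property (c.restrictScalars k) LinearMap.id
    (Finsupp.linearCombination_id_surjective k[G] ρ.asModule)
  let π' : ρ.asModule →ₗ[k] ρ.asModule := π
  refine Module.Projective.of_split ((s ∘ₗ π').sumOfConjugatesEquivariant G) c
    (LinearMap.ext fun v => ?_)
  have hcs (x : ρ.asModule) : c (s x) = x := LinearMap.congr_fun hs x
  simp only [LinearMap.comp_apply, LinearMap.sumOfConjugatesEquivariant_apply,
    LinearMap.conjugate_apply, map_sum, map_smul, hcs, LinearMap.id_apply]
  rw [← Equiv.sum_comp (Equiv.inv G)]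
  refine (Finset.sum_congr rfl fun g _ => ?_).trans (hπ v)
  simp only [Equiv.inv_apply, inv_inv, single_smul, one_smul]
  rfl

end IsRelativelyProjective

/-- The projection of the permutation module `k[X]` onto the line spanned by `x`, along the other
basis vectors. Its conjugates by a transitive group action on `X` exhibit Higman's condition. -/
noncomputable def coeffProj (k : Type*) [CommRing k] {X : Type*} (x : X) : k[X] →ₗ[k] k[X] :=
  lsingle x ∘ₗ Finsupp.lapply x ∘ₗ (coeffLinearEquiv k).toLinearMap

lemma coeffProj_single [DecidableEq X] (x y : X) (r : k) :
    coeffProj k x (single y r) = if y = x then single y r else 0 := by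
  by_cases h : y = x <;> simp [coeffProj, h]

lemma sum_conj_coeffProj [Fintype G] [MulAction G X] [MulAction.IsPretransitive G X] (x₀ : X)
    (v : k[X]) :
    ∑ g, ofMulAction k G X g (coeffProj k x₀ (ofMulAction k G X g⁻¹ v)) =
      Nat.card (MulAction.stabilizer G x₀) • v := by
  classical
  induction v using MonoidAlgebra.induction_linear with
  | zero => simp
  | add v w hv hw => simp only [map_add, Finset.sum_add_distrib, hv, hw, smul_add]
  | single x r =>
    obtain ⟨g, rfl⟩ := MulAction.exists_smul_eq G x₀ x
    have hterm (h : G) : ofMulAction k G X (g * h) (coeffProj k x₀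
        (ofMulAction k G X (g * h)⁻¹ (single (g • x₀) r))) =
        if h ∈ MulAction.stabilizer G x₀ then single (g • x₀) r else 0 := by
      have hfix : (g * h)⁻¹ • g • x₀ = x₀ ↔ h ∈ MulAction.stabilizer G x₀ := by
        rw [inv_smul_eq_iff, mul_smul, smul_left_cancel_iff, MulAction.mem_stabilizer_iff, eq_comm]
      rw [ofMulAction_single, coeffProj_single, apply_ite (ofMulAction k G X (g * h)),
        ofMulAction_single, smul_inv_smul, map_zero]
      simp only [hfix]
    rw [← Equiv.sum_comp (Equiv.mulLeft g)]
    simp only [Equiv.coe_mulLeft, hterm, ← Finset.sum_filter, Finset.sum_const,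
      Nat.card_eq_fintype_card, Fintype.card_subtype]

lemma isRelativelyProjective_ofMulAction [Fintype G] [MulAction G X]
    [MulAction.IsPretransitive G X] (x₀ : X)
    (hx₀ : IsUnit (Nat.card (MulAction.stabilizer G x₀) : k)) :
    IsRelativelyProjective (ofMulAction k G X) := by
  obtain ⟨u, hu⟩ := hx₀
  refine ⟨(↑u⁻¹ : k) • coeffProj k x₀, fun v => ?_⟩
  simp only [LinearMap.smul_apply, map_smul, ← Finset.smul_sum, sum_conj_coeffProj]
  rw [← Nat.cast_smul_eq_nsmul k, ← hu, smul_smul, Units.inv_mul, one_smul]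

lemma sum_single_mul_coeffProj_one [Fintype G] (x : k[G]) :
    ∑ g : G, single g (1 : k) * coeffProj k 1 (single g⁻¹ 1 * x) = x := by
  have hmul (g : G) (y : k[G]) : single g 1 * y = ofMulAction k G G g y := by
    rw [← asAlgebraHom_ofMulAction_smul_eq_mul, asAlgebraHom_single_one]
  have hstab : Nat.card (MulAction.stabilizer G (1 : G)) = 1 := by simp
  simp only [hmul, sum_conj_coeffProj, hstab, one_smul]

lemma isRelativelyProjective_ofModule' [Fintype G] [Module k[G] V] [IsScalarTower k k[G] V]
    [Module.Projective k[G] V] : IsRelativelyProjective (ofModule' (k := k) (G := G) V) := by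
  obtain ⟨s, hs⟩ := Module.projective_def.1 ‹Module.Projective k[G] V›
  let c : (V →₀ k[G]) →ₗ[k[G]] V := Finsupp.linearCombination k[G] id
  let π : (V →₀ k[G]) →ₗ[k] V →₀ k[G] := Finsupp.mapRange.linearMap (coeffProj k 1)
  have hπ (x : V →₀ k[G]) : ∑ g : G, single g (1 : k) • π (single g⁻¹ (1 : k) • x) = x := by
    ext1 v
    simpa [π, Finsupp.finsetSum_apply] using sum_single_mul_coeffProj_one (x v)
  refine ⟨c.restrictScalars k ∘ₗ π ∘ₗ s.restrictScalars k, fun v => ?_⟩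
  calc
    _ = c (∑ g : G, single g (1 : k) • π (single g⁻¹ (1 : k) • s v)) := by
      simp [ofModule']
    _ = c (s v) := by rw [hπ]
    _ = v := hs v

end Higman

lemma IsRelativelyProjective.card_dvd_finrank {p : ℕ} [Fact p.Prime] {k S V : Type*} [Field k]
    [CharP k p] [Group S] [Fintype S] [AddCommGroup V] [Module k V] [FiniteDimensional k V]
    {ρ : Representation k S V} (hρ : IsRelativelyProjective ρ) (hS : IsPGroup p S) :
    Nat.card S ∣ Module.finrank k V := by
  refine ⟨Module.finrank k ρ.invariants,
    (finrank_le_card_mul_finrank_invariants hS ρ).antisymm ?_⟩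
  rw [← hρ.range_norm_eq_invariants]
  exact card_mul_finrank_range_norm_le_finrank hS ρ

lemma finrank_monoidAlgebra (k X : Type*) [Semiring k] [StrongRankCondition k] :
    Module.finrank k k[X] = Nat.card X := by
  rw [(coeffLinearEquiv k).finrank_eq]
  simp [Module.finrank, Nat.card]

lemma dvd_prime_pow_of_forall_dvd_index {G : Type*} [Group G] [Finite G] {p a q n : ℕ}
    (hp : p.Prime) (hq : ¬ p ∣ q) (hcard : Nat.card G = p ^ a * q)
    (hn : ∀ L : Subgroup G, ¬ p ∣ Nat.card L → n ∣ L.index) : n ∣ p ^ a := by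
  have hnG : n ∣ p ^ a * q := by
    simpa [hcard] using hn ⊥ (by simpa using hp.not_dvd_one)
  refine Nat.Coprime.dvd_of_dvd_mul_right (Nat.coprime_of_dvd fun l hl hln hlq => ?_) hnG
  have _ : Fact l.Prime := ⟨hl⟩
  let L : Sylow l G := default
  obtain ⟨m, hm⟩ := IsPGroup.iff_card.1 L.isPGroup'
  have hpL : ¬ p ∣ Nat.card L := fun h =>
    hq ((Nat.prime_dvd_prime_iff_eq hp hl).1 (hp.dvd_of_dvd_pow (hm ▸ h)) ▸ hlq)
  exact L.not_dvd_index (hln.trans (hn L hpL))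

theorem stmt14_general.{u, v, w} (F : Type u) [Field F] (p : ℕ) [Fact p.Prime] [CharP F p]
    (G : Type v) [Group G] [Fintype G] (a q : ℕ) (hq : ¬ p ∣ q)
    (hcard : Fintype.card G = p ^ a * q) :
    (∀ (P : Type w) [AddCommGroup P] [Module F[G] P] [Module F P]
        [IsScalarTower F F[G] P] [FiniteDimensional F P],
        Module.Projective F[G] P → p ^ a ∣ Module.finrank F P) ∧
    (∀ n : ℕ,
        (∀ (P : Type (max u v)) [AddCommGroup P] [Module F[G] P] [Module F P]
          [IsScalarTower F F[G] P] [FiniteDimensional F P],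
          Module.Projective F[G] P → Nontrivial P → n ∣ Module.finrank F P) →
        n ∣ p ^ a) := by
  rw [← Nat.card_eq_fintype_card] at hcard
  refine ⟨fun P _ _ _ _ _ _ => ?_, fun n hn => ?_⟩
  · obtain ⟨S, hS⟩ := Sylow.exists_subgroup_card_pow_prime p (hcard ▸ dvd_mul_right _ _)
    let _ : Fintype S := Fintype.ofFinite S
    exact hS ▸ (isRelativelyProjective_ofModule'.comp_subtype S).card_dvd_finrank (.of_card hS)
  · refine dvd_prime_pow_of_forall_dvd_index Fact.out hq hcard fun L hL => ?_
    have hL' : (Nat.card L : F) ≠ 0 := mt (CharP.cast_eq_zero_iff F p _).1 hL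
    have _ : FiniteDimensional F F[G ⧸ L] := .equiv (coeffLinearEquiv F).symm
    have hstab : MulAction.stabilizer G ((1 : G) : G ⧸ L) = L := MulAction.stabilizer_quotient L
    have hP := (isRelativelyProjective_ofMulAction ((1 : G) : G ⧸ L)
      (hstab.symm ▸ hL'.isUnit)).projective_asModule
    have hdim := hn _ hP (inferInstanceAs (Nontrivial F[G ⧸ L]))
    rwa [(asModuleEquiv _).finrank_eq, finrank_monoidAlgebra] at hdim

/-- Dickson's theorem, cf. Proposition 5.4 of the paper.
Let `F` be an algebraically closed field of prime characteristic `p`, let `G`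
be a finite group with `|G| = p^a · q` and `p ∤ q`. Then `p^a` divides the
`F`-dimension of every finite-dimensional projective `FG`-module, and any `n`
dividing the dimensions of all nonzero finite-dimensional projective
`FG`-modules divides `p^a`; i.e. the gcd of these dimensions is `p^a`. -/
theorem stmt14 (F : Type) [Field F] [IsAlgClosed F] (p : ℕ) [Fact p.Prime] [CharP F p]
    (G : Type) [Group G] [Fintype G] (a q : ℕ) (hq : ¬ p ∣ q)
    (hcard : Fintype.card G = p ^ a * q) :
    (∀ (P : Type) [AddCommGroup P] [Module (MonoidAlgebra F G) P] [Module F P]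
        [IsScalarTower F (MonoidAlgebra F G) P] [FiniteDimensional F P],
        Module.Projective (MonoidAlgebra F G) P → p ^ a ∣ Module.finrank F P) ∧
    (∀ n : ℕ,
        (∀ (P : Type) [AddCommGroup P] [Module (MonoidAlgebra F G) P] [Module F P]
          [IsScalarTower F (MonoidAlgebra F G) P] [FiniteDimensional F P],
          Module.Projective (MonoidAlgebra F G) P → Nontrivial P →
            n ∣ Module.finrank F P) →
        n ∣ p ^ a) := by
  exact stmt14_general F p G a q hq hcard
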